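/- For every positive integer N there exists a connected 5-regular graph G of order n ≥ N such that ι(G) ≥ 3n/14. -/

import Mathlib

open Classical

/-- The closed neighborhood `N[D]` of a set `D` of vertices. -/
def closedNbhd {V : Type*} (G : SimpleGraph V) (D : Set V) : Set V :=
  {v | v ∈ D ∨ ∃ u ∈ D, G.Adj u v}

/-- `S` is an isolating set of `G`: deleting `N[S]` leaves no edge. -/
def IsIsolatingSet {V : Type*} (G : SimpleGraph V) (S : Set V) : Prop :=
  ∀ u v : V, G.Adj u v → u ∈ closedNbhd G S ∨ v ∈ closedNbhd G S

/-- The isolation number: the minimum cardinality of an isolating set. -/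
noncomputable def isolationNumber {V : Type*} [Fintype V] (G : SimpleGraph V) : ℕ :=
  sInf {k | ∃ S : Set V, IsIsolatingSet G S ∧ S.ncard = k}

/-!
Attach to every vertex of a long cycle its own copy of a 14-vertex gadget, identifying the vertex
with the root of the copy. The root has degree 3 in the gadget and all other vertices have degree 5,
so the result is 5-regular. Only the root of a copy has neighbors outside that copy. Hence an
isolating set must, inside each copy, already dominate an endpoint of every edge that avoids the
root. In the gadget no two vertices do that, so each copy contributes at least 3 of its 14 vertices.
-/

section Isolation

variable {V V' : Type*} {G : SimpleGraph V} {G' : SimpleGraph V'}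

theorem closedNbhd_mono {S T : Set V} (hST : S ⊆ T) : closedNbhd G S ⊆ closedNbhd G T :=
  fun _ => Or.imp (fun hv => hST hv) fun ⟨u, hu, huv⟩ => ⟨u, hST hu, huv⟩

theorem mem_closedNbhd_pair {x y v : V} :
    v ∈ closedNbhd G {x, y} ↔ (v = x ∨ v = y) ∨ G.Adj x v ∨ G.Adj y v := by
  simp [closedNbhd]

theorem closedNbhd_image_iso (f : G ≃g G') (S : Set V) :
    closedNbhd G' (f '' S) = f '' closedNbhd G S := by
  ext v
  obtain ⟨v, rfl⟩ := f.surjective v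
  simp [closedNbhd, f.map_adj_iff]

theorem isIsolatingSet_univ (G : SimpleGraph V) : IsIsolatingSet G Set.univ :=
  fun u _ _ => Or.inl (Or.inl (Set.mem_univ u))

theorem IsIsolatingSet.image_iso {S : Set V} (hS : IsIsolatingSet G S) (f : G ≃g G') :
    IsIsolatingSet G' (f '' S) := by
  intro u v huv
  obtain ⟨u, rfl⟩ := f.surjective u
  obtain ⟨v, rfl⟩ := f.surjective v
  rw [closedNbhd_image_iso, f.injective.mem_set_image, f.injective.mem_set_image]
  exact hS u v (f.map_adj_iff.1 huv)

variable [Fintype V] [Fintype V']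

theorem le_isolationNumber {k : ℕ} (hk : ∀ S, IsIsolatingSet G S → k ≤ S.ncard) :
    k ≤ isolationNumber G :=
  le_csInf ⟨_, Set.univ, isIsolatingSet_univ G, rfl⟩ fun _ ⟨S, hS, hcard⟩ => hcard ▸ hk S hS

theorem IsIsolatingSet.isolationNumber_le_ncard {S : Set V} (hS : IsIsolatingSet G S) :
    isolationNumber G ≤ S.ncard :=
  Nat.sInf_le ⟨S, hS, rfl⟩

theorem isolationNumber_le_of_iso (f : G ≃g G') : isolationNumber G' ≤ isolationNumber G :=
  le_isolationNumber fun S hS =>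
    (hS.image_iso f).isolationNumber_le_ncard.trans_eq (Set.ncard_image_of_injective S f.injective)

theorem isolationNumber_eq_of_iso (f : G ≃g G') : isolationNumber G = isolationNumber G' :=
  (isolationNumber_le_of_iso f.symm).antisymm (isolationNumber_le_of_iso f)

end Isolation

/-- `S` dominates an endpoint of every edge of `H` that is not incident with the root `r`. Unlike
for an isolating set of `H - r`, the root itself may belong to `S`. -/
def IsolatesAwayFrom {W : Type*} (H : SimpleGraph W) (r : W) (S : Set W) : Prop :=
  ∀ u v, u ≠ r → v ≠ r → H.Adj u v → u ∈ closedNbhd H S ∨ v ∈ closedNbhd H S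

theorem IsolatesAwayFrom.mono {W : Type*} {H : SimpleGraph W} {r : W} {S T : Set W}
    (hS : IsolatesAwayFrom H r S) (hST : S ⊆ T) : IsolatesAwayFrom H r T :=
  fun u v hu hv huv =>
    (hS u v hu hv huv).imp (fun h => closedNbhd_mono hST h) fun h => closedNbhd_mono hST h

/-- The rooted product of `K` with the graph `H` rooted at `r`: one copy `{i} × W` of `H` for every
vertex `i` of `K`, with the roots `(i, r)` of the copies joined to each other as in `K`. -/
def rootedProduct {I W : Type*} (K : SimpleGraph I) (H : SimpleGraph W) (r : W) :
    SimpleGraph (I × W) where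
  Adj p q := p.1 = q.1 ∧ H.Adj p.2 q.2 ∨ p.2 = r ∧ q.2 = r ∧ K.Adj p.1 q.1
  symm := ⟨fun _ _ => Or.imp (fun ⟨hi, huv⟩ => ⟨hi.symm, huv.symm⟩)
    fun ⟨hp, hq, hij⟩ => ⟨hq, hp, hij.symm⟩⟩
  loopless := ⟨fun _ h => h.elim (fun h => H.irrefl h.2) fun h => K.irrefl h.2.2⟩

namespace rootedProduct

variable {I W : Type*} (K : SimpleGraph I) (H : SimpleGraph W) (r : W)

/-- The inclusion of `H` as the copy over the vertex `i` of `K`. -/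
def copyHom (i : I) : H →g rootedProduct K H r where
  toFun v := (i, v)
  map_rel' huv := Or.inl ⟨rfl, huv⟩

/-- The inclusion of `K` as the subgraph induced by the roots of the copies of `H`. -/
def rootHom : K →g rootedProduct K H r where
  toFun i := (i, r)
  map_rel' hij := Or.inr ⟨rfl, rfl, hij⟩

variable {K H}

theorem connected (hK : K.Connected) (hH : H.Connected) : (rootedProduct K H r).Connected := by
  obtain ⟨i₀⟩ := hK.nonempty
  refine (SimpleGraph.connected_iff_exists_forall_reachable _).2 ⟨(i₀, r), fun ⟨i, v⟩ => ?_⟩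
  have along_roots := (hK.preconnected i₀ i).map (rootHom K H r)
  have inside_copy := (hH.preconnected r v).map (copyHom K H r i)
  exact along_roots.trans inside_copy

variable {r}

theorem neighborSet_of_ne_root (i : I) {v : W} (hv : v ≠ r) :
    (rootedProduct K H r).neighborSet (i, v) = Prod.mk i '' H.neighborSet v := by
  ext ⟨j, w⟩
  simp [rootedProduct, hv, and_comm]

variable (r) in
theorem neighborSet_root (i : I) :
    (rootedProduct K H r).neighborSet (i, r) =
      Prod.mk i '' H.neighborSet r ∪ (fun j => (j, r)) '' K.neighborSet i := by
  ext ⟨j, w⟩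
  simp [rootedProduct, and_comm, eq_comm]

theorem ncard_neighborSet_of_ne_root (i : I) {v : W} (hv : v ≠ r) :
    ((rootedProduct K H r).neighborSet (i, v)).ncard = (H.neighborSet v).ncard := by
  rw [neighborSet_of_ne_root i hv, Set.ncard_image_of_injective _ (Prod.mk_right_injective i)]

variable (r) in
theorem ncard_neighborSet_root (i : I) [Finite (H.neighborSet r)]
    [Finite (K.neighborSet i)] :
    ((rootedProduct K H r).neighborSet (i, r)).ncard =
      (H.neighborSet r).ncard + (K.neighborSet i).ncard := by
  have disjoint :
      Disjoint (Prod.mk i '' H.neighborSet r) ((fun j => (j, r)) '' K.neighborSet i) := by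
    rw [Set.disjoint_left]
    rintro _ ⟨v, hv, rfl⟩ ⟨j, -, hjv⟩
    exact hv.ne (congrArg Prod.snd hjv)
  rw [neighborSet_root, Set.ncard_union_eq disjoint,
    Set.ncard_image_of_injective _ (Prod.mk_right_injective i),
    Set.ncard_image_of_injective _ (Prod.mk_left_injective r)]

theorem mem_closedNbhd_fiber {S : Set (I × W)} {i : I} {v : W} (hv : v ≠ r)
    (h : (i, v) ∈ closedNbhd (rootedProduct K H r) S) : v ∈ closedNbhd H (Prod.mk i ⁻¹' S) := by
  rcases h with hmem | ⟨⟨j, u⟩, hu, ⟨rfl, huv⟩ | ⟨-, hroot, -⟩⟩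
  · exact Or.inl hmem
  · exact Or.inr ⟨u, hu, huv⟩
  · exact absurd hroot hv

theorem isolatesAwayFrom_fiber {S : Set (I × W)} (hS : IsIsolatingSet (rootedProduct K H r) S)
    (i : I) : IsolatesAwayFrom H r (Prod.mk i ⁻¹' S) :=
  fun u v hu hv huv => (hS (i, u) (i, v) (Or.inl ⟨rfl, huv⟩)).imp
    (mem_closedNbhd_fiber hu) (mem_closedNbhd_fiber hv)

theorem mul_card_le_isolationNumber [Fintype I] [Fintype W] {k : ℕ}
    (hk : ∀ T, IsolatesAwayFrom H r T → k ≤ T.ncard) :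
    k * Fintype.card I ≤ isolationNumber (rootedProduct K H r) := by
  refine le_isolationNumber fun S hS => ?_
  rw [Set.ncard_eq_toFinset_card', ← Finset.card_univ]
  refine Finset.mul_card_image_le_card_of_maps_to (f := Prod.fst) (by simp) k fun i _ => ?_
  calc k ≤ (Prod.mk i ⁻¹' S).ncard := hk _ (isolatesAwayFrom_fiber hS i)
    _ = (Prod.mk i '' (Prod.mk i ⁻¹' S)).ncard :=
      (Set.ncard_image_of_injective _ (Prod.mk_right_injective i)).symm
    _ = {p ∈ S.toFinset | p.1 = i}.card := by
      rw [← Set.ncard_coe_finset]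
      congr 1
      ext ⟨j, v⟩
      aesop

end rootedProduct

/-- One orientation of each edge of the gadget: `none` is the root and the other vertices form a
cycle, so that `i + 1`, `i + 2` and `i + 6` are taken modulo 13. -/
def gadgetArc : Option (Fin 13) → Option (Fin 13) → Bool
  | some i, some j => j = i + 1 ∨ j = i + 2 ∨ i ≤ 4 ∧ j = i + 6
  | none, some j => j = 5 ∨ j = 11 ∨ j = 12
  | _, none => false

/-- The gadget: the square of a 13-cycle, to which a matching of five chords `{i, i + 6}` and a root
joined to the three unmatched vertices have been added. -/
def gadget : SimpleGraph (Option (Fin 13)) :=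
  SimpleGraph.fromRel fun u v => gadgetArc u v

namespace gadget

instance : DecidableRel gadget.Adj := by
  unfold gadget
  infer_instance

theorem ncard_neighborSet_root : (gadget.neighborSet none).ncard = 3 := by
  rw [Set.ncard_eq_toFinset_card']
  decide +kernel

theorem ncard_neighborSet_some (i : Fin 13) : (gadget.neighborSet (some i)).ncard = 5 := by
  rw [Set.ncard_eq_toFinset_card']
  decide +kernel +revert

theorem adj_some_of_cycleGraph_adj :
    ∀ {i j : Fin 13}, (SimpleGraph.cycleGraph 13).Adj i j → gadget.Adj (some i) (some j) := by
  decide +kernel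

theorem connected : gadget.Connected := by
  let cycleHom : SimpleGraph.cycleGraph 13 →g gadget := ⟨some, adj_some_of_cycleGraph_adj⟩
  have root_adj : gadget.Adj (some 5) none := by decide +kernel
  refine (SimpleGraph.connected_iff_exists_forall_reachable _).2 ⟨some 5, fun v => ?_⟩
  cases v with
  | none => exact root_adj.reachable
  | some i => exact (SimpleGraph.cycleGraph_connected.preconnected 5 i).map cycleHom

-- Two cycle vertices `x` and `y` dominate a block of five consecutive vertices each, and the far
-- ends of their chords. If the blocks are disjoint, both far ends lie in the opposite block and
-- some gap keeps two consecutive vertices. If they overlap, the far ends remove at most two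
-- vertices from a gap of length at least four, and two vertices at distance at most 2 survive.
theorem exists_adj_off_closedNbhd_pair : ∀ x y, ∃ i j, gadget.Adj (some i) (some j) ∧
    some i ∉ closedNbhd gadget {x, y} ∧ some j ∉ closedNbhd gadget {x, y} := by
  simp only [mem_closedNbhd_pair]
  decide +kernel

theorem not_isolatesAwayFrom_pair (x y : Option (Fin 13)) :
    ¬ IsolatesAwayFrom gadget none {x, y} := by
  intro h
  obtain ⟨i, j, hij, hi, hj⟩ := exists_adj_off_closedNbhd_pair x y
  exact (h _ _ (Option.some_ne_none i) (Option.some_ne_none j) hij).elim hi hj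

theorem three_le_ncard_of_isolatesAwayFrom {T : Set (Option (Fin 13))}
    (hT : IsolatesAwayFrom gadget none T) : 3 ≤ T.ncard := by
  by_contra! hcard
  rw [Set.ncard_eq_toFinset_card'] at hcard
  obtain ⟨U, hTU, hU⟩ := Finset.exists_superset_card_eq (Nat.le_of_lt_succ hcard) (by simp)
  obtain ⟨x, y, -, rfl⟩ := Finset.card_eq_two.1 hU
  exact not_isolatesAwayFrom_pair x y (hT.mono (by simpa [← Finset.coe_subset] using hTU))

end gadget

/-- The ring of `m` gadgets: a cycle of length `m` with a gadget rooted at each of its vertices. -/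
def gadgetRing (m : ℕ) : SimpleGraph (Fin m × Option (Fin 13)) :=
  rootedProduct (SimpleGraph.cycleGraph m) gadget none

namespace gadgetRing

theorem connected (m : ℕ) : (gadgetRing (m + 1)).Connected :=
  rootedProduct.connected none SimpleGraph.cycleGraph_connected gadget.connected

theorem ncard_neighborSet {m : ℕ} (p : Fin (m + 3) × Option (Fin 13)) :
    ((gadgetRing (m + 3)).neighborSet p).ncard = 5 := by
  obtain ⟨i, v⟩ := p
  cases v with
  | none =>
    have cycle_degree : ((SimpleGraph.cycleGraph (m + 3)).neighborSet i).ncard = 2 := by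
      rw [← SimpleGraph.coe_neighborFinset, Set.ncard_coe_finset,
        SimpleGraph.card_neighborFinset_eq_degree, SimpleGraph.cycleGraph_degree_three_le]
    rw [gadgetRing, rootedProduct.ncard_neighborSet_root, gadget.ncard_neighborSet_root,
      cycle_degree]
  | some a =>
    rw [gadgetRing, rootedProduct.ncard_neighborSet_of_ne_root i (Option.some_ne_none a),
      gadget.ncard_neighborSet_some]

theorem three_mul_le_isolationNumber (m : ℕ) : 3 * m ≤ isolationNumber (gadgetRing m) := by
  rw [gadgetRing]
  simpa only [Fintype.card_fin] using rootedProduct.mul_card_le_isolationNumber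
    (K := SimpleGraph.cycleGraph m) fun _ => gadget.three_le_ncard_of_isolatesAwayFrom

end gadgetRing

/-- There are arbitrarily large connected 5-regular graphs with isolation number
at least `3/14` of their order. -/
theorem exists_five_regular_isolation_ge (N : ℕ) (hN : 0 < N) :
    ∃ (n : ℕ) (G : SimpleGraph (Fin n)), N ≤ n ∧ G.Connected ∧
      (∀ v : Fin n, (G.neighborSet v).ncard = 5) ∧
      3 * (n : ℝ) / 14 ≤ (isolationNumber G : ℝ) := by
  have order : Fintype.card (Fin (N + 3) × Option (Fin 13)) = (N + 3) * 14 := by simp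
  let f := (gadgetRing (N + 3)).overFinIso order
  refine ⟨(N + 3) * 14, (gadgetRing (N + 3)).overFin order, by lia,
    f.connected_iff.1 (gadgetRing.connected (N + 2)), fun v => ?_, ?_⟩
  · rw [Set.ncard_congr' (f.symm.mapNeighborSet v), gadgetRing.ncard_neighborSet]
  · rw [← isolationNumber_eq_of_iso f]
    have bound : 3 * ((N + 3 : ℕ) : ℝ) ≤ isolationNumber (gadgetRing (N + 3)) :=
      mod_cast gadgetRing.three_mul_le_isolationNumber (N + 3)
    push_cast at bound ⊢
    linarith
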